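/- Let α, β, γ, w ∈ ℂ with none of α, β, γ a nonpositive integer, and let k ∈ (0,1). Define f̃_{m,n} and c̃_n as in the context, and set d := max{1, |α|, |β|, |γ|}. Then for every n ≥ 0: |c̃_n| ≤ exp( π²·|w| / (6·(1−k²)) ) · (d)_n² / (n!·|(γ)_n|). -/

import Mathlib

/-- The Pochhammer symbol `(x)_n = x(x+1)⋯(x+n-1)`. -/
noncomputable def poch (x : ℂ) (n : ℕ) : ℂ := ∏ i ∈ Finset.range n, (x + (i : ℂ))

/-- The index set of tuples `(ℓ_1, j_1, …, ℓ_m, j_m)` with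
`0 ≤ ℓ_1 ≤ j_1 < ℓ_2 ≤ j_2 < ⋯ < ℓ_m ≤ j_m < n`, encoded as pairs of functions
`(ℓ, j) : (Fin m → Fin n) × (Fin m → Fin n)`. -/
def heunIdx (m n : ℕ) : Finset ((Fin m → Fin n) × (Fin m → Fin n)) :=
  Finset.univ.filter fun p =>
    (∀ s : Fin m, (p.1 s : ℕ) ≤ (p.2 s : ℕ)) ∧
    (∀ s t : Fin m, (s : ℕ) + 1 = (t : ℕ) → (p.2 s : ℕ) < (p.1 t : ℕ))

/-- The coefficients `f̃_{m,n}` for the case `δ = β + 1`: `f̃_{0,n} = 1`; for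
`1 ≤ m ≤ n`, `f̃_{m,n} = (-1)^m Σ ∏_{s=1}^m [j_s!(α)_{j_s}(β)_{ℓ_s}(γ)_{ℓ_s} /
(ℓ_s!(α)_{ℓ_s}(β)_{j_s+1}(γ)_{j_s+1})] k^{2(j_s-ℓ_s)}`, the sum running over
`heunIdx m n`; and `f̃_{m,n} = 0` for `m < 0` or `m > n`. -/
noncomputable def heunft (k : ℝ) (α β γ : ℂ) (m : ℤ) (n : ℕ) : ℂ :=
  if m = 0 then 1
  else if m < 0 ∨ (n : ℤ) < m then 0
  else (-1 : ℂ) ^ m.toNat *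
    ∑ p ∈ heunIdx m.toNat n, ∏ s : Fin m.toNat,
      ((Nat.factorial (p.2 s : ℕ) : ℂ) * poch α (p.2 s : ℕ) * poch β (p.1 s : ℕ) *
          poch γ (p.1 s : ℕ)) /
        ((Nat.factorial (p.1 s : ℕ) : ℂ) * poch α (p.1 s : ℕ) * poch β ((p.2 s : ℕ) + 1) *
          poch γ ((p.2 s : ℕ) + 1)) *
      (k : ℂ) ^ ((2 : ℤ) * (((p.2 s : ℕ) : ℤ) - ((p.1 s : ℕ) : ℤ)))

/-- The Taylor coefficients `c̃_n = ((β)_n / n!) Σ_{m=0}^n f̃_{m,n} wᵐ` of the local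
Heun solution for `δ = β + 1`. -/
noncomputable def heunct (k : ℝ) (α β γ w : ℂ) (n : ℕ) : ℂ :=
  poch β n / (Nat.factorial n : ℂ) *
    ∑ m ∈ Finset.range (n + 1), heunft k α β γ (m : ℤ) n * w ^ m

/-- The real Pochhammer symbol `(x)_n = x(x+1)⋯(x+n-1)`. -/
noncomputable def pochR (x : ℝ) (n : ℕ) : ℝ := ∏ i ∈ Finset.range n, (x + (i : ℝ))

lemma aux_telescope (B : ℕ → ℝ) (hpos : ∀ a, 0 < B a) (hanti : Antitone B) (h1 : ∀ a, B a ≤ 1) :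
    ∀ (m N : ℕ) (l j : Fin m → ℕ), (∀ s, l s ≤ j s) →
      (∀ s t : Fin m, (s : ℕ) + 1 = (t : ℕ) → j s < l t) → (∀ s, j s < N) →
      B N * ∏ s, B (l s) / B (j s + 1) ≤ 1 := by
  intro m
  induction m with
  | zero => intro N l j _ _ _; simpa using h1 N
  | succ m ih =>
    intro N l j hlj hjl hN
    have hstrict : ∀ s : Fin m, j s.castSucc < l (Fin.last m) := by
      have key : ∀ (e : ℕ) (s : Fin m), (s : ℕ) + e + 1 = m → j s.castSucc < l (Fin.last m) := by
        intro e
        induction e with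
        | zero => intro s hs; exact hjl _ _ (by simpa using hs)
        | succ e ihe =>
          intro s hs
          have h2 := ihe ⟨s + 1, by omega⟩ (by simp; omega)
          have h3 := hjl s.castSucc (Fin.castSucc ⟨s + 1, by omega⟩) (by simp)
          have h4 := hlj (Fin.castSucc ⟨s + 1, by omega⟩)
          omega
      intro s
      exact key (m - s - 1) s (by omega)
    have hIH := ih (l (Fin.last m)) (fun s => l s.castSucc) (fun s => j s.castSucc)
      (fun s => hlj _) (fun s t h => hjl _ _ (by simpa using h)) hstrict
    rw [Fin.prod_univ_castSucc]
    have hr : B N / B (j (Fin.last m) + 1) ≤ 1 :=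
      (div_le_one (hpos _)).2 (hanti (hN _))
    have hp : 0 ≤ B (l (Fin.last m)) * ∏ s : Fin m, B (l s.castSucc) / B (j s.castSucc + 1) :=
      mul_nonneg (hpos _).le (Finset.prod_nonneg fun s _ => (div_pos (hpos _) (hpos _)).le)
    calc _ = (B N / B (j (Fin.last m) + 1)) *
          (B (l (Fin.last m)) * ∏ s : Fin m, B (l s.castSucc) / B (j s.castSucc + 1)) := by ring
      _ ≤ 1 * 1 := mul_le_mul hr hIH hp zero_le_one
      _ = 1 := by ring

lemma aux_strictMono {m n : ℕ} {p : (Fin m → Fin n) × (Fin m → Fin n)} (hp : p ∈ heunIdx m n) :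
    StrictMono p.2 := by
  rw [heunIdx, Finset.mem_filter] at hp
  obtain ⟨-, h1, h2⟩ := hp
  cases m with
  | zero => intro a; exact a.elim0
  | succ m =>
    rw [Fin.strictMono_iff_lt_succ]
    intro i
    have := h2 i.castSucc i.succ (by simp)
    have h3 := h1 i.succ
    rw [Fin.lt_def]; omega

open Classical in
lemma aux_esymm (m n : ℕ) (a : Fin n → ℝ) (ha : ∀ i, 0 ≤ a i) :
    (m.factorial : ℝ) * ∑ j ∈ Finset.univ.filter (fun j : Fin m → Fin n => StrictMono j),
      ∏ s, a (j s) ≤ (∑ i, a i) ^ m := by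
  have h1 : (∑ i, a i) ^ m = ∑ f : Fin m → Fin n, ∏ s, a (f s) := by
    have := Finset.prod_univ_sum (fun _ : Fin m => (Finset.univ : Finset (Fin n)))
      (fun _ i => a i)
    simpa using this
  set F := Finset.univ.filter (fun j : Fin m → Fin n => StrictMono j) with hF
  have h2 : (m.factorial : ℝ) * ∑ j ∈ F, ∏ s, a (j s) =
      ∑ q ∈ (Finset.univ : Finset (Equiv.Perm (Fin m))) ×ˢ F, ∏ s, a ((q.2 ∘ q.1) s) := by
    rw [Finset.sum_product]
    have : ∀ σ : Equiv.Perm (Fin m), ∑ j ∈ F, ∏ s, a ((j ∘ σ) s) = ∑ j ∈ F, ∏ s, a (j s) := by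
      intro σ
      refine Finset.sum_congr rfl fun j _ => ?_
      exact Equiv.prod_comp σ (fun s => a (j s))
    simp only [this]
    simp [Fintype.card_perm]
  rw [h2, h1]
  have hinj : Set.InjOn (fun q : Equiv.Perm (Fin m) × (Fin m → Fin n) => q.2 ∘ q.1)
      ((Finset.univ : Finset (Equiv.Perm (Fin m))) ×ˢ F : Finset _) := by
    rintro ⟨σ, j⟩ hq ⟨σ', j'⟩ hq' h
    simp only [hF, Finset.coe_product, Set.mem_prod, Finset.mem_coe, Finset.mem_filter,
      Finset.mem_univ, true_and] at hq hq'
    simp only at h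
    have hr : Set.range j = Set.range j' := by
      rw [← EquivLike.range_comp j σ, ← EquivLike.range_comp j' σ', h]
    have hj : j = j' := (StrictMono.range_inj hq hq').1 hr
    subst hj
    have : σ = σ' := by
      ext s
      have := hq.injective (congrFun h s)
      rw [this]
    rw [this]
  rw [← Finset.sum_image (f := fun f : Fin m → Fin n => ∏ s, a (f s)) hinj]
  exact Finset.sum_le_sum_of_subset_of_nonneg (Finset.subset_univ _)
    (fun f _ _ => Finset.prod_nonneg fun s _ => ha _)

lemma aux_geom (q : ℝ) (h0 : 0 ≤ q) (h1 : q < 1) (n : ℕ) (j : Fin n) :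
    ∑ l : Fin n, (if (l : ℕ) ≤ j then q ^ ((j : ℕ) - l) else 0) ≤ 1 / (1 - q) := by
  rw [Fin.sum_univ_eq_sum_range (fun l => if l ≤ (j : ℕ) then q ^ ((j : ℕ) - l) else 0) n,
    ← Finset.sum_filter]
  have : (Finset.range n).filter (fun l => l ≤ (j : ℕ)) = Finset.range (j + 1) := by
    ext x; have := j.2; simp; omega
  have hrefl : ∑ l ∈ Finset.range ((j : ℕ) + 1), q ^ ((j : ℕ) - l) =
      ∑ i ∈ Finset.range ((j : ℕ) + 1), q ^ i := by
    rw [← Finset.sum_range_reflect (fun i => q ^ i)]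
    exact Finset.sum_congr rfl fun x _ => by simp
  rw [this, hrefl,
    one_div, ← tsum_geometric_of_lt_one h0 h1]
  exact (summable_geometric_of_lt_one h0 h1).sum_le_tsum _ (fun i _ => pow_nonneg h0 i)

lemma aux_zeta (n : ℕ) : ∑ i : Fin n, 1 / ((i : ℝ) + 1) ^ 2 ≤ Real.pi ^ 2 / 6 := by
  have h := hasSum_zeta_two
  have h2 := (hasSum_nat_add_iff' 1).2 h
  simp only [Finset.range_one, Finset.sum_singleton] at h2
  rw [Fin.sum_univ_eq_sum_range (fun i => 1 / ((i : ℝ) + 1) ^ 2) n]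
  have := sum_le_hasSum (Finset.range n) (fun i _ => by positivity) h2
  simpa using this

open Classical in
lemma aux_sum (q : ℝ) (h0 : 0 ≤ q) (h1 : q < 1) (m n : ℕ) :
    ∑ p ∈ heunIdx m n, ∏ s, (q ^ ((p.2 s : ℕ) - (p.1 s : ℕ)) * (1 / (((p.2 s : ℕ) : ℝ) + 1) ^ 2))
      ≤ (Real.pi ^ 2 / (6 * (1 - q))) ^ m / m.factorial := by
  set h : Fin n → Fin n → ℝ := fun l j => if (l : ℕ) ≤ j then q ^ ((j : ℕ) - l) else 0 with hh
  have hnn : ∀ l j, 0 ≤ h l j := by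
    intro l j; simp only [hh]; split_ifs <;> positivity
  set F := Finset.univ.filter (fun j : Fin m → Fin n => StrictMono j) with hF
  have hq : 0 < 1 - q := by linarith
  set z : Fin n → ℝ := fun j => 1 / ((j : ℝ) + 1) ^ 2 with hz
  have hzn : ∀ j, 0 ≤ z j := fun j => by simp only [hz]; positivity
  calc _ = ∑ p ∈ heunIdx m n, ∏ s, (h (p.1 s) (p.2 s) * z (p.2 s)) := by
        refine Finset.sum_congr rfl fun p hp => Finset.prod_congr rfl fun s _ => ?_
        rw [heunIdx, Finset.mem_filter] at hp
        simp only [hh, hz, if_pos (hp.2.1 s)]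
    _ ≤ ∑ p ∈ (Finset.univ : Finset (Fin m → Fin n)) ×ˢ F,
          ∏ s, (h (p.1 s) (p.2 s) * z (p.2 s)) := by
        refine Finset.sum_le_sum_of_subset_of_nonneg ?_
          (fun p _ _ => Finset.prod_nonneg fun s _ => mul_nonneg (hnn _ _) (hzn _))
        intro p hp
        simp only [hF, Finset.mem_product, Finset.mem_filter, Finset.mem_univ, true_and]
        exact aux_strictMono hp
    _ = ∑ j ∈ F, (∏ s, ∑ l, h l (j s)) * ∏ s, z (j s) := by
        rw [Finset.sum_product_right]
        refine Finset.sum_congr rfl fun j _ => ?_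
        have := Finset.prod_univ_sum (fun _ : Fin m => (Finset.univ : Finset (Fin n)))
          (fun s l => h l (j s))
        rw [Fintype.piFinset_univ] at this
        rw [this, Finset.sum_mul]
        exact Finset.sum_congr rfl fun l _ => Finset.prod_mul_distrib
    _ ≤ ∑ j ∈ F, (1 / (1 - q)) ^ m * ∏ s, z (j s) := by
        refine Finset.sum_le_sum fun j _ => ?_
        refine mul_le_mul_of_nonneg_right ?_ (Finset.prod_nonneg fun s _ => hzn _)
        have := Finset.prod_le_prod (s := Finset.univ) (f := fun s => ∑ l, h l (j s))
          (g := fun _ : Fin m => 1 / (1 - q))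
          (fun s _ => Finset.sum_nonneg fun l _ => hnn _ _) (fun s _ => aux_geom q h0 h1 n (j s))
        simpa using this
    _ = (1 / (1 - q)) ^ m * ∑ j ∈ F, ∏ s, z (j s) := by rw [Finset.mul_sum]
    _ ≤ (1 / (1 - q)) ^ m * ((Real.pi ^ 2 / 6) ^ m / m.factorial) := by
        refine mul_le_mul_of_nonneg_left ?_ (by positivity)
        rw [le_div_iff₀ (by positivity), mul_comm]
        refine (aux_esymm m n z hzn).trans ?_
        exact pow_le_pow_left₀ (Finset.sum_nonneg fun i _ => hzn i) (aux_zeta n) m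
    _ = _ := by
        rw [← mul_div_assoc, ← mul_pow]
        congr 2
        field_simp

lemma poch_succ' (x : ℂ) (a : ℕ) : poch x (a + 1) = poch x a * (x + a) := by
  simp [poch, Finset.prod_range_succ]

lemma poch_ne (x : ℂ) (hx : ∀ j : ℕ, x ≠ -(j : ℂ)) (a : ℕ) : poch x a ≠ 0 := by
  rw [poch, Finset.prod_ne_zero_iff]
  intro i _ h
  exact hx i (eq_neg_of_add_eq_zero_left h)

lemma pochR_succ' (x : ℝ) (a : ℕ) : pochR x (a + 1) = pochR x a * (x + a) := by
  simp [pochR, Finset.prod_range_succ]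

lemma pochR_pos' (x : ℝ) (hx : 1 ≤ x) (a : ℕ) : 0 < pochR x a :=
  Finset.prod_pos fun i _ => by positivity

lemma aux_norm (x : ℂ) (d : ℝ) (h : ‖x‖ ≤ d) (a : ℕ) : ‖x + a‖ ≤ d + a := by
  refine (norm_add_le _ _).trans ?_
  simpa using h

/-- Termwise bound. -/
lemma aux_term (k : ℝ) (hk0 : 0 < k) (α β γ : ℂ)
    (hα : ∀ j : ℕ, α ≠ -(j : ℂ)) (hβ : ∀ j : ℕ, β ≠ -(j : ℂ))
    (hγ : ∀ j : ℕ, γ ≠ -(j : ℂ)) (d : ℝ) (h1 : 1 ≤ d) (ha : ‖α‖ ≤ d) (hb : ‖β‖ ≤ d)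
    (hc : ‖γ‖ ≤ d) (m n : ℕ) (p : (Fin m → Fin n) × (Fin m → Fin n)) (hp : p ∈ heunIdx m n) :
    ‖poch β n‖ * ‖poch γ n‖ * ‖∏ s : Fin m,
      ((Nat.factorial (p.2 s : ℕ) : ℂ) * poch α (p.2 s : ℕ) * poch β (p.1 s : ℕ) *
          poch γ (p.1 s : ℕ)) /
        ((Nat.factorial (p.1 s : ℕ) : ℂ) * poch α (p.1 s : ℕ) * poch β ((p.2 s : ℕ) + 1) *
          poch γ ((p.2 s : ℕ) + 1)) *
      (k : ℂ) ^ ((2 : ℤ) * (((p.2 s : ℕ) : ℤ) - ((p.1 s : ℕ) : ℤ)))‖ ≤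
    (pochR d n) ^ 2 *
      ∏ s, ((k ^ 2) ^ ((p.2 s : ℕ) - (p.1 s : ℕ)) * (1 / (((p.2 s : ℕ) : ℝ) + 1) ^ 2)) := by
  rw [heunIdx, Finset.mem_filter] at hp
  obtain ⟨-, hlj, hjl⟩ := hp
  have hD := pochR_pos' d h1
  have hdp : ∀ a : ℕ, 0 < d + a := fun a => by positivity
  set A : ℕ → ℝ := fun a => (a.factorial : ℝ) * ‖poch α a‖ / (pochR d a) ^ 2 with hA
  set B : ℕ → ℝ := fun a => ‖poch β a‖ * ‖poch γ a‖ / (pochR d a) ^ 2 with hB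
  have nα := fun a => norm_pos_iff.2 (poch_ne α hα a)
  have nβ := fun a => norm_pos_iff.2 (poch_ne β hβ a)
  have nγ := fun a => norm_pos_iff.2 (poch_ne γ hγ a)
  have hApos : ∀ a, 0 < A a := fun a => by
    have := nα a; have := hD a; simp only [hA]; positivity
  have hBpos : ∀ a, 0 < B a := fun a => by
    have := nβ a; have := nγ a; have := hD a; simp only [hB]; positivity
  have hAanti : Antitone A := by
    refine antitone_nat_of_succ_le fun a => ?_
    have e : A (a + 1) = A a * ((((a : ℝ) + 1) * ‖α + a‖) / (d + a) ^ 2) := by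
      simp only [hA, poch_succ', pochR_succ', Nat.factorial_succ, norm_mul]
      push_cast
      have := hD a; have := hdp a
      field_simp
    rw [e]
    refine mul_le_of_le_one_right (hApos a).le ?_
    rw [div_le_one (by have := hdp a; positivity), sq]
    exact mul_le_mul (by linarith) (aux_norm α d ha a) (norm_nonneg _) (hdp a).le
  have hBanti : Antitone B := by
    refine antitone_nat_of_succ_le fun a => ?_
    have e : B (a + 1) = B a * ((‖β + a‖ * ‖γ + a‖) / (d + a) ^ 2) := by
      simp only [hB, poch_succ', pochR_succ', norm_mul]
      have := hD a; have := hdp a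
      field_simp
    rw [e]
    refine mul_le_of_le_one_right (hBpos a).le ?_
    rw [div_le_one (by have := hdp a; positivity), sq]
    exact mul_le_mul (aux_norm β d hb a) (aux_norm γ d hc a) (norm_nonneg _) (hdp a).le
  have hB1 : ∀ a, B a ≤ 1 := fun a => by
    refine (hBanti (Nat.zero_le a)).trans ?_
    simp [hB, poch, pochR]
  have htel := aux_telescope B hBpos hBanti hB1 m n (fun s => p.1 s) (fun s => p.2 s)
    hlj hjl (fun s => (p.2 s).2)
  have hfac : ∀ s, ‖((Nat.factorial (p.2 s : ℕ) : ℂ) * poch α (p.2 s : ℕ) * poch β (p.1 s : ℕ) *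
          poch γ (p.1 s : ℕ)) /
        ((Nat.factorial (p.1 s : ℕ) : ℂ) * poch α (p.1 s : ℕ) * poch β ((p.2 s : ℕ) + 1) *
          poch γ ((p.2 s : ℕ) + 1)) *
      (k : ℂ) ^ ((2 : ℤ) * (((p.2 s : ℕ) : ℤ) - ((p.1 s : ℕ) : ℤ)))‖ ≤
      (B (p.1 s) / B (p.2 s + 1)) *
      ((k ^ 2) ^ ((p.2 s : ℕ) - (p.1 s : ℕ)) * (1 / (((p.2 s : ℕ) : ℝ) + 1) ^ 2)) := by
    intro s
    have hle := hlj s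
    generalize (p.2 s : ℕ) = j at *
    generalize (p.1 s : ℕ) = l at *
    have hkp : (k : ℂ) ^ ((2 : ℤ) * ((j : ℤ) - (l : ℤ))) = ((k : ℂ) ^ 2) ^ (j - l) := by
      rw [zpow_mul, ← Nat.cast_sub hle, zpow_natCast]
      norm_cast
    rw [hkp]
    simp only [norm_mul, norm_div, norm_pow, Complex.norm_natCast, Complex.norm_real,
      Real.norm_eq_abs, abs_of_pos hk0]
    have e : ((j.factorial : ℝ) * ‖poch α j‖ * ‖poch β l‖ * ‖poch γ l‖) /
        ((l.factorial : ℝ) * ‖poch α l‖ * ‖poch β (j + 1)‖ * ‖poch γ (j + 1)‖) =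
        (A j / A l) * (B l / B (j + 1)) * (1 / (d + j) ^ 2) := by
      simp only [hA, hB, pochR_succ']
      have := hD j; have := hD l; have := hdp j
      have := nα l; have := nβ (j + 1); have := nγ (j + 1)
      field_simp
    rw [e]
    have hr : A j / A l ≤ 1 := (div_le_one (hApos _)).2 (hAanti hle)
    have hBB : 0 < B l / B (j + 1) := div_pos (hBpos _) (hBpos _)
    have hd2 : 1 / (d + j) ^ 2 ≤ 1 / ((j : ℝ) + 1) ^ 2 := by
      gcongr 1 / ?_ ^ 2
      linarith
    calc _ ≤ 1 * (B l / B (j + 1)) * (1 / ((j : ℝ) + 1) ^ 2) * (k ^ 2) ^ (j - l) := by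
          gcongr
      _ = _ := by ring
  rw [norm_prod]
  have hP : 0 ≤ ∏ s, ((k ^ 2) ^ ((p.2 s : ℕ) - (p.1 s : ℕ)) *
      (1 / (((p.2 s : ℕ) : ℝ) + 1) ^ 2)) := Finset.prod_nonneg fun s _ => by positivity
  have hprod := Finset.prod_le_prod (s := Finset.univ) (fun s _ => norm_nonneg _)
    (fun s _ => hfac s)
  rw [Finset.prod_mul_distrib] at hprod
  have hBn : ‖poch β n‖ * ‖poch γ n‖ = (pochR d n) ^ 2 * B n := by
    simp only [hB]; have := hD n; field_simp
  rw [hBn]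
  refine (mul_le_mul_of_nonneg_left hprod
    (mul_nonneg (sq_nonneg _) (hBpos n).le)).trans ?_
  rw [mul_assoc, ← mul_assoc (B n)]
  refine mul_le_mul_of_nonneg_left ?_ (sq_nonneg _)
  exact mul_le_of_le_one_left hP htel

lemma aux_f (k : ℝ) (hk0 : 0 < k) (hk1 : k < 1) (α β γ : ℂ)
    (hα : ∀ j : ℕ, α ≠ -(j : ℂ)) (hβ : ∀ j : ℕ, β ≠ -(j : ℂ))
    (hγ : ∀ j : ℕ, γ ≠ -(j : ℂ)) (d : ℝ) (h1 : 1 ≤ d) (ha : ‖α‖ ≤ d) (hb : ‖β‖ ≤ d)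
    (hc : ‖γ‖ ≤ d) (m n : ℕ) (hm : m ≤ n) :
    ‖poch β n‖ * ‖poch γ n‖ * ‖heunft k α β γ (m : ℤ) n‖ ≤
      (pochR d n) ^ 2 * ((Real.pi ^ 2 / (6 * (1 - k ^ 2))) ^ m / m.factorial) := by
  have hq : k ^ 2 < 1 := by nlinarith
  have hform : heunft k α β γ (m : ℤ) n = (-1 : ℂ) ^ m *
    ∑ p ∈ heunIdx m n, ∏ s : Fin m,
      ((Nat.factorial (p.2 s : ℕ) : ℂ) * poch α (p.2 s : ℕ) * poch β (p.1 s : ℕ) *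
          poch γ (p.1 s : ℕ)) /
        ((Nat.factorial (p.1 s : ℕ) : ℂ) * poch α (p.1 s : ℕ) * poch β ((p.2 s : ℕ) + 1) *
          poch γ ((p.2 s : ℕ) + 1)) *
      (k : ℂ) ^ ((2 : ℤ) * (((p.2 s : ℕ) : ℤ) - ((p.1 s : ℕ) : ℤ))) := by
    rcases Nat.eq_zero_or_pos m with rfl | h
    · simp [heunft, heunIdx]
    · rw [heunft, if_neg (by omega), if_neg (by omega)]
      rfl
  rw [hform, norm_mul, norm_pow, norm_neg, norm_one, one_pow, one_mul]
  refine (mul_le_mul_of_nonneg_left (norm_sum_le _ _) (by positivity)).trans ?_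
  rw [Finset.mul_sum]
  refine (Finset.sum_le_sum fun p hp =>
    aux_term k hk0 α β γ hα hβ hγ d h1 ha hb hc m n p hp).trans ?_
  rw [← Finset.mul_sum]
  exact mul_le_mul_of_nonneg_left (aux_sum (k ^ 2) (sq_nonneg k) hq m n) (sq_nonneg _)

/-- The estimate `|c̃_n| ≤ exp(π²|w|/(6(1-k²))) (d)_n² / (n! |(γ)_n|)` for the Taylor
coefficients of `Hℓ(1/k², -(w-βγ)/k²; α, β, γ, β+1; z)`, where `d = max{1,|α|,|β|,|γ|}`. -/
theorem heun_tilde_coefficients_estimate (k : ℝ) (hk0 : 0 < k) (hk1 : k < 1)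
    (α β γ w : ℂ)
    (hα : ∀ j : ℕ, α ≠ -(j : ℂ)) (hβ : ∀ j : ℕ, β ≠ -(j : ℂ))
    (hγ : ∀ j : ℕ, γ ≠ -(j : ℂ))
    (d : ℝ) (hd : d = max 1 (max ‖α‖ (max ‖β‖ ‖γ‖))) :
    ∀ n : ℕ,
      ‖heunct k α β γ w n‖ ≤
        Real.exp (Real.pi ^ 2 * ‖w‖ / (6 * (1 - k ^ 2))) *
          (pochR d n) ^ 2 / ((Nat.factorial n : ℝ) * ‖poch γ n‖) := by
  intro n
  have h1 : 1 ≤ d := by rw [hd]; exact le_max_left _ _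
  have ha : ‖α‖ ≤ d := by rw [hd]; simp
  have hb : ‖β‖ ≤ d := by rw [hd]; simp
  have hc : ‖γ‖ ≤ d := by rw [hd]; simp
  have hq : 0 < 1 - k ^ 2 := by nlinarith
  have nγ := norm_pos_iff.2 (poch_ne γ hγ n)
  have hfac : (0 : ℝ) < n.factorial := by positivity
  rw [le_div_iff₀ (by positivity), heunct, norm_mul, norm_div, Complex.norm_natCast]
  set x : ℝ := Real.pi ^ 2 * ‖w‖ / (6 * (1 - k ^ 2)) with hx
  have hx0 : 0 ≤ x := by positivity
  calc _ = ‖poch β n‖ * ‖poch γ n‖ *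
        ‖∑ m ∈ Finset.range (n + 1), heunft k α β γ (m : ℤ) n * w ^ m‖ := by
        field_simp
    _ ≤ ‖poch β n‖ * ‖poch γ n‖ *
        ∑ m ∈ Finset.range (n + 1), ‖heunft k α β γ (m : ℤ) n‖ * ‖w‖ ^ m := by
        refine mul_le_mul_of_nonneg_left ?_ (by positivity)
        refine (norm_sum_le _ _).trans (le_of_eq ?_)
        simp only [norm_mul, norm_pow]
    _ ≤ ∑ m ∈ Finset.range (n + 1), (pochR d n) ^ 2 * (x ^ m / m.factorial) := by
        rw [Finset.mul_sum]
        refine Finset.sum_le_sum fun m hm => ?_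
        have := aux_f k hk0 hk1 α β γ hα hβ hγ d h1 ha hb hc m n
          (by have := Finset.mem_range.1 hm; omega)
        rw [← mul_assoc]
        refine (mul_le_mul_of_nonneg_right this (by positivity)).trans (le_of_eq ?_)
        have e : x = Real.pi ^ 2 / (6 * (1 - k ^ 2)) * ‖w‖ := by rw [hx]; ring
        rw [e, mul_pow]; ring
    _ ≤ (pochR d n) ^ 2 * Real.exp x := by
        rw [← Finset.mul_sum]
        exact mul_le_mul_of_nonneg_left (Real.sum_le_exp_of_nonneg hx0 _) (sq_nonneg _)
    _ = _ := by ring
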